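/- Let φ:ℝ→ℝ be an (ℓ,L) bi-Lipschitz mapping (ℓ|x−y| ≤ |φ(x)−φ(y)| ≤ L|x−y|, 0<ℓ<L<∞) that satisfies φ(x+a) = φ(x) + b for fixed a,b>0 and all x. Then there exists a sequence of C^∞ diffeomorphisms φₙ:ℝ→ℝ, each (ℓ,L) bi-Lipschitz and satisfying φₙ(x+a) = φₙ(x) + b, such that φₙ converges uniformly to φ. -/

import Mathlib

/-!
Mollify `φ` by smooth bumps `ρ` of shrinking support. By the first mean value theorem for integrals,
the increment `(ρ ⋆ φ) x - (ρ ⋆ φ) y`, an average of the increments `φ (x - t) - φ (y - t)` of the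
continuous function `φ`, equals one of them. So any relation that constrains the increments of `φ`
in terms of the displacement `x - y` alone passes to `ρ ⋆ φ`; bi-Lipschitz bounds and the equation
`φ (x + a) - φ x = b` are of this kind. The lower bound makes `ρ ⋆ φ` injective, hence strictly
monotone, with no finite limit at `±∞`, hence onto.
-/

open MeasureTheory Filter Topology ContinuousLinearMap
open scoped Convolution

section Mollification

variable {E : Type*} [NormedAddCommGroup E] [NormedSpace ℝ E] [FiniteDimensional ℝ E]
  [MeasurableSpace E] [BorelSpace E] {μ : Measure E}

theorem integrable_normed_smul {F : Type*} [NormedAddCommGroup F] [NormedSpace ℝ F]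
    [IsLocallyFiniteMeasure μ] [μ.IsOpenPosMeasure] {c : E} (ρ : ContDiffBump c) {g : E → F}
    (hg : Continuous g) : Integrable (fun t ↦ ρ.normed μ t • g t) μ :=
  (ρ.continuous_normed.smul hg).integrable_of_hasCompactSupport
    ρ.hasCompactSupport_normed.smul_right

theorem exists_integral_normed_mul_eq [IsLocallyFiniteMeasure μ] [μ.IsOpenPosMeasure] {c : E}
    (ρ : ContDiffBump c) {g : E → ℝ} (hg : Continuous g) :
    ∃ t, ∫ s, ρ.normed μ s * g s ∂μ = g t := by
  have hint : Integrable (fun s ↦ g s * ρ.normed μ s) μ := by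
    simpa only [smul_eq_mul, mul_comm] using integrable_normed_smul ρ hg
  obtain ⟨t, -, ht⟩ := exists_eq_const_mul_setIntegral_of_nonneg isConnected_univ
    MeasurableSet.univ hg.continuousOn ρ.integrable_normed.integrableOn hint.integrableOn
    fun s _ ↦ ρ.nonneg_normed s
  refine ⟨t, ?_⟩
  simpa only [setIntegral_univ, ρ.integral_normed, mul_one, mul_comm (ρ.normed μ _)] using ht

theorem exists_normed_convolution_sub_eq [IsLocallyFiniteMeasure μ] [μ.IsOpenPosMeasure]
    (ρ : ContDiffBump (0 : E)) {g : E → ℝ} (hg : Continuous g) (x y : E) :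
    ∃ t, (ρ.normed μ ⋆[lsmul ℝ ℝ, μ] g) x - (ρ.normed μ ⋆[lsmul ℝ ℝ, μ] g) y =
      g (x - t) - g (y - t) := by
  have hcont (z : E) : Continuous fun t ↦ g (z - t) := by fun_prop
  obtain ⟨t, ht⟩ := exists_integral_normed_mul_eq (μ := μ) ρ ((hcont x).sub (hcont y))
  refine ⟨t, Eq.trans ?_ ht⟩
  simp only [convolution_def, lsmul_apply, Pi.sub_apply, mul_sub]
  exact (integral_sub (integrable_normed_smul ρ (hcont x))
    (integrable_normed_smul ρ (hcont y))).symm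

theorem tendstoUniformly_normed_convolution [μ.IsAddHaarMeasure] {F : Type*}
    [NormedAddCommGroup F] [NormedSpace ℝ F] [CompleteSpace F] {ι : Type*} {l : Filter ι}
    {ρ : ι → ContDiffBump (0 : E)} (hρ : Tendsto (fun i ↦ (ρ i).rOut) l (𝓝 0)) {g : E → F}
    (hg : UniformContinuous g) :
    TendstoUniformly (fun i ↦ (ρ i).normed μ ⋆[lsmul ℝ ℝ, μ] g) g l := by
  refine Metric.tendstoUniformly_iff.2 fun ε hε ↦ ?_
  obtain ⟨δ, hδ, hgδ⟩ := Metric.uniformContinuous_iff.1 hg (ε / 2) (half_pos hε)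
  filter_upwards [hρ.eventually_lt_const hδ] with i hi x
  rw [dist_comm]
  refine ((ρ i).dist_normed_convolution_le hg.continuous.aestronglyMeasurable
    fun y hy ↦ (hgδ ?_).le).trans_lt (half_lt_self hε)
  exact (Metric.mem_ball.1 hy).trans hi

end Mollification

theorem surjective_of_continuous_of_antilipschitzWith {f : ℝ → ℝ} {K : NNReal}
    (hcont : Continuous f) (hf : AntilipschitzWith K f) : Function.Surjective f := by
  have no_limit {l : Filter ℝ} [l.NeBot] (hl : l ≤ Bornology.cobounded ℝ) :
      ¬∃ y, Tendsto f l (𝓝 y) := fun ⟨y, hy⟩ ↦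
    hy.not_tendsto (Metric.disjoint_nhds_cobounded y) (hf.tendsto_cobounded.mono_left hl)
  have no_limit_top := no_limit IsOrderBornology.atTop_le_cobounded
  have no_limit_bot := no_limit IsOrderBornology.atBot_le_cobounded
  rcases hcont.strictMono_of_inj hf.injective with hmono | hanti
  · exact hcont.surjective
      ((tendsto_atTop_of_monotone hmono.monotone).resolve_right no_limit_top)
      ((tendsto_atBot_of_monotone hmono.monotone).resolve_right no_limit_bot)
  · exact hcont.surjective'
      ((tendsto_atBot_of_antitone hanti.antitone).resolve_right no_limit_bot)
      ((tendsto_atTop_of_antitone hanti.antitone).resolve_right no_limit_top)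

theorem antilipschitzWith_of_mul_dist_le {X Y : Type*} [PseudoMetricSpace X] [PseudoMetricSpace Y]
    {f : X → Y} {ℓ : ℝ} (hℓ : 0 < ℓ) (hf : ∀ x y, ℓ * dist x y ≤ dist (f x) (f y)) :
    AntilipschitzWith ℓ.toNNReal⁻¹ f :=
  AntilipschitzWith.of_le_mul_dist fun x y ↦ by
    rw [NNReal.coe_inv, Real.coe_toNNReal ℓ hℓ.le, le_inv_mul_iff₀ hℓ]
    exact hf x y

theorem stmt_4_general {ℓ L : ℝ} (hℓ : 0 < ℓ) {φ : ℝ → ℝ}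
    (hbilip : ∀ x y : ℝ, ℓ * |x - y| ≤ |φ x - φ y| ∧ |φ x - φ y| ≤ L * |x - y|) :
    ∃ φseq : ℕ → ℝ → ℝ,
      (∀ n, ContDiff ℝ (⊤ : ℕ∞) (φseq n)) ∧
      (∀ n, Function.Bijective (φseq n)) ∧
      (∀ n x y, ℓ * |x - y| ≤ |φseq n x - φseq n y| ∧ |φseq n x - φseq n y| ≤ L * |x - y|) ∧
      (∀ a b, (∀ x, φ (x + a) = φ x + b) → ∀ n x, φseq n (x + a) = φseq n x + b) ∧
      TendstoUniformly φseq φ atTop := by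
  have hlip : LipschitzWith L.toNNReal φ := LipschitzWith.of_dist_le' fun x y ↦ (hbilip x y).2
  let ρ (n : ℕ) : ContDiffBump (0 : ℝ) :=
    ⟨1 / (n + 1) / 2, 1 / (n + 1), by positivity, half_lt_self (by positivity)⟩
  let ψ (n : ℕ) : ℝ → ℝ := (ρ n).normed volume ⋆[lsmul ℝ ℝ, volume] φ
  have hincr (n : ℕ) (x y : ℝ) : ∃ t, ψ n x - ψ n y = φ (x - t) - φ (y - t) :=
    exists_normed_convolution_sub_eq (ρ n) hlip.continuous x y
  have hsmooth (n : ℕ) : ContDiff ℝ (⊤ : ℕ∞) (ψ n) :=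
    (ρ n).hasCompactSupport_normed.contDiff_convolution_left _ (ρ n).contDiff_normed
      hlip.continuous.locallyIntegrable
  have hψ (n : ℕ) (x y : ℝ) : ℓ * |x - y| ≤ |ψ n x - ψ n y| ∧ |ψ n x - ψ n y| ≤ L * |x - y| := by
    obtain ⟨t, ht⟩ := hincr n x y
    simpa only [ht, sub_sub_sub_cancel_right] using hbilip (x - t) (y - t)
  have hanti (n : ℕ) : AntilipschitzWith ℓ.toNNReal⁻¹ (ψ n) :=
    antilipschitzWith_of_mul_dist_le hℓ fun x y ↦ (hψ n x y).1
  refine ⟨ψ, hsmooth, fun n ↦ ⟨(hanti n).injective,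
    surjective_of_continuous_of_antilipschitzWith (hsmooth n).continuous (hanti n)⟩, hψ, ?_,
    tendstoUniformly_normed_convolution tendsto_one_div_add_atTop_nhds_zero_nat
      hlip.uniformContinuous⟩
  intro a b hper n x
  obtain ⟨t, ht⟩ := hincr n (x + a) x
  rwa [add_sub_right_comm, hper, add_sub_cancel_left, sub_eq_iff_eq_add'] at ht

theorem stmt_4 (ℓ L a b : ℝ) (hℓ : 0 < ℓ) (hℓL : ℓ < L) (ha : 0 < a) (hb : 0 < b)
    (φ : ℝ → ℝ)
    (hbilip : ∀ x y : ℝ, ℓ * |x - y| ≤ |φ x - φ y| ∧ |φ x - φ y| ≤ L * |x - y|)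
    (hper : ∀ x, φ (x + a) = φ x + b) :
    ∃ φseq : ℕ → ℝ → ℝ,
      (∀ n, ContDiff ℝ (⊤ : ℕ∞) (φseq n)) ∧
      (∀ n, Function.Bijective (φseq n)) ∧
      (∀ n x y, ℓ * |x - y| ≤ |φseq n x - φseq n y| ∧ |φseq n x - φseq n y| ≤ L * |x - y|) ∧
      (∀ n x, φseq n (x + a) = φseq n x + b) ∧
      TendstoUniformly φseq φ Filter.atTop := by
  obtain ⟨φseq, hsmooth, hbij, hψ, hperiod, hlim⟩ := stmt_4_general hℓ hbilip
  exact ⟨φseq, hsmooth, hbij, hψ, hperiod a b hper, hlim⟩
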